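/- Let R be a commutative ring, n ≥ 1, and let X = S_n(v,w) and Y = S_n(v',w') be Suslin matrices in M_{2^n}(R). Then X·Y·X is again a Suslin matrix, i.e. there exist v'', w'' ∈ R^{n+1} with X·Y·X = S_n(v'',w''); moreover its conjugate satisfies S̄_n(v'',w'') = X̄·Ȳ·X̄. -/

import Mathlib

open Matrix

noncomputable section

/-- Reindexing equivalence `Fin (2 ^ n) ⊕ Fin (2 ^ n) ≃ Fin (2 ^ (n + 1))`. -/
def pow2Equiv (n : ℕ) : Fin (2 ^ n) ⊕ Fin (2 ^ n) ≃ Fin (2 ^ (n + 1)) :=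
  finSumFinEquiv.trans (finCongr (by rw [pow_succ]; ring))

/-- The Suslin matrix `S_n(v, w)` of size `2 ^ n` associated to `v, w : Fin (n+1) → R`. -/
def sus (R : Type) [CommRing R] : (n : ℕ) → (Fin (n + 1) → R) → (Fin (n + 1) → R) →
    Matrix (Fin (2 ^ n)) (Fin (2 ^ n)) R
  | 0, v, _ => v 0 • 1
  | n + 1, v, w =>
      Matrix.reindex (pow2Equiv n) (pow2Equiv n)
        (Matrix.fromBlocks (v 0 • 1) (sus R n (v ∘ Fin.succ) (w ∘ Fin.succ))
          (-(sus R n (w ∘ Fin.succ) (v ∘ Fin.succ))ᵀ) (w 0 • 1))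

/-- The conjugate Suslin matrix `S̄_n(v, w) = S_n(w, v)ᵀ`. -/
def susBar (R : Type) [CommRing R] (n : ℕ) (v w : Fin (n + 1) → R) :
    Matrix (Fin (2 ^ n)) (Fin (2 ^ n)) R :=
  (sus R n w v)ᵀ

/-- Suslin's matrices `J_n`. -/
def Jmat (R : Type) [CommRing R] : (n : ℕ) → Matrix (Fin (2 ^ n)) (Fin (2 ^ n)) R
  | 0 => 1
  | n + 1 =>
      if Even (n + 1) then
        Matrix.reindex (pow2Equiv n) (pow2Equiv n)
          (Matrix.fromBlocks (Jmat R n) 0 0 (-(Jmat R n)))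
      else
        Matrix.reindex (pow2Equiv n) (pow2Equiv n)
          (Matrix.fromBlocks 0 (Jmat R n) (-(Jmat R n)) 0)

/-- The involution `M ↦ M* = J_n · Mᵀ · J_nᵀ`. -/
def invol (R : Type) [CommRing R] (n : ℕ) (M : Matrix (Fin (2 ^ n)) (Fin (2 ^ n)) R) :
    Matrix (Fin (2 ^ n)) (Fin (2 ^ n)) R :=
  Jmat R n * Mᵀ * (Jmat R n)ᵀ

/-- `φ(v, w) = [[0, S_n(v,w)], [S̄_n(v,w), 0]]` (note the shift: vectors in `R^{n+1}`,
matrices of size `2 ^ (n + 1)`). -/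
def phiMat (R : Type) [CommRing R] (n : ℕ) (v w : Fin (n + 1) → R) :
    Matrix (Fin (2 ^ (n + 1))) (Fin (2 ^ (n + 1))) R :=
  Matrix.reindex (pow2Equiv n) (pow2Equiv n)
    (Matrix.fromBlocks 0 (sus R n v w) (susBar R n v w) 0)

/-- The set of Suslin matrices of size `2 ^ m`. -/
def SuslinSet (R : Type) [CommRing R] (m : ℕ) : Set (Matrix (Fin (2 ^ m)) (Fin (2 ^ m)) R) :=
  {S | ∃ v w : Fin (m + 1) → R, S = sus R m v w}

/-- The image of the hyperbolic space `R^{m+1} ⊕ R^{m+1}` inside the Clifford algebra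
`M_{2^{m+1}}(R)`. -/
def PhiSet (R : Type) [CommRing R] (m : ℕ) :
    Set (Matrix (Fin (2 ^ (m + 1))) (Fin (2 ^ (m + 1))) R) :=
  {x | ∃ v w : Fin (m + 1) → R, x = phiMat R m v w}

/-- The block diagonal matrix `diag(g₁, g₂)`. -/
def diagBlock (R : Type) [CommRing R] (m : ℕ)
    (g₁ g₂ : Matrix (Fin (2 ^ m)) (Fin (2 ^ m)) R) :
    Matrix (Fin (2 ^ (m + 1))) (Fin (2 ^ (m + 1))) R :=
  Matrix.reindex (pow2Equiv m) (pow2Equiv m) (Matrix.fromBlocks g₁ 0 0 g₂)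

/-- `Spin_{2(m+1)}(R)`, as the set of pairs `(g₁, g₂)` such that `x = diag(g₁, g₂)`
satisfies `x · x* = 1` and conjugation by `x` maps the image of the hyperbolic space
onto itself. -/
def SpinPair (R : Type) [CommRing R] (m : ℕ) :
    Set (Matrix (Fin (2 ^ m)) (Fin (2 ^ m)) R × Matrix (Fin (2 ^ m)) (Fin (2 ^ m)) R) :=
  {p | IsUnit p.1 ∧ IsUnit p.2 ∧
    diagBlock R m p.1 p.2 * invol R (m + 1) (diagBlock R m p.1 p.2) = 1 ∧
    (fun y => diagBlock R m p.1 p.2 * y * (diagBlock R m p.1 p.2)⁻¹) '' PhiSet R m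
      = PhiSet R m}

/-- The group `G_m(R)` of `g ∈ GL_{2^m}(R)` such that `g · S · g*` is a Suslin matrix
for every Suslin matrix `S`. -/
def GSet (R : Type) [CommRing R] (m : ℕ) : Set (Matrix (Fin (2 ^ m)) (Fin (2 ^ m)) R) :=
  {g | IsUnit g ∧ ∀ S ∈ SuslinSet R m, g * S * invol R m g ∈ SuslinSet R m}

/-- The group `SG_m(R)` of `g ∈ G_m(R)` preserving the length `l(S(v,w)) = v ⬝ᵥ w`. -/
def SGSet (R : Type) [CommRing R] (m : ℕ) : Set (Matrix (Fin (2 ^ m)) (Fin (2 ^ m)) R) :=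
  {g | g ∈ GSet R m ∧ ∀ v w v' w' : Fin (m + 1) → R,
    g * sus R m v w * invol R m g = sus R m v' w' → v' ⬝ᵥ w' = v ⬝ᵥ w}

/-- The hyperbolic quadratic form `q(v, w) = v ⬝ᵥ w` on `R^n ⊕ R^n`. -/
def hypForm (R : Type) [CommRing R] (n : ℕ) :
    QuadraticForm R ((Fin n → R) × (Fin n → R)) :=
  LinearMap.BilinMap.toQuadraticMap
    (LinearMap.mk₂ R (fun x y => x.1 ⬝ᵥ y.2)
      (fun x x' y => by simp [add_dotProduct])
      (fun c x y => by simp [smul_dotProduct])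
      (fun x y y' => by simp [dotProduct_add])
      (fun x c y => by simp [dotProduct_smul]))

/-- `E_i = S_m(e_i, 0)`. -/
def Emat (R : Type) [CommRing R] (m : ℕ) (i : Fin (m + 1)) :
    Matrix (Fin (2 ^ m)) (Fin (2 ^ m)) R :=
  sus R m (Pi.single i 1) 0

/-- `F_i = S_m(0, e_i)`. -/
def Fmat (R : Type) [CommRing R] (m : ℕ) (i : Fin (m + 1)) :
    Matrix (Fin (2 ^ m)) (Fin (2 ^ m)) R :=
  sus R m 0 (Pi.single i 1)

/-! Write `X = S_n(v, w)`, `q = v ⬝ᵥ w`, and `Z = S_n(x, y)`. Polarizing `X * X̄ = q • 1` gives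
`X * Z̄ + Z * X̄ = p • 1` with `p = v ⬝ᵥ y + x ⬝ᵥ w`; multiplying by `X` on the right and using
`X̄ * X = q • 1` yields `X * Z̄ * X = p • X - q • Z`, which is a Suslin matrix because `S_n` is
linear in the pair `(v, w)`. Interchanging the two vectors and transposing turns this into the
formula for `X̄ * Z * X̄`. Finally, every Suslin matrix `Y` has the form `Z̄`. -/

theorem fromBlocks_smul_one_mul_fromBlocks_smul_one {S l m : Type*} [CommRing S]
    [Fintype l] [DecidableEq l] [Fintype m] [DecidableEq m]
    {X : Matrix l m S} {Y : Matrix m l S} {q : S} (hXY : X * Y = q • 1) (hYX : Y * X = q • 1)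
    (a b : S) :
    fromBlocks (a • 1) X (-Y) (b • 1) * fromBlocks (b • 1) (-X) Y (a • 1) =
      (a * b + q) • (1 : Matrix (l ⊕ m) (l ⊕ m) S) := by
  rw [fromBlocks_multiply, ← fromBlocks_one, fromBlocks_smul]
  congr 1 <;> simp [hXY, hYX, add_smul, smul_smul, mul_comm, add_comm]

section

variable {R : Type} [CommRing R] {n : ℕ}

theorem sus_succ (v w : Fin (n + 2) → R) :
    sus R (n + 1) v w = reindex (pow2Equiv n) (pow2Equiv n)
      (fromBlocks (v 0 • 1) (sus R n (Fin.tail v) (Fin.tail w))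
        (-susBar R n (Fin.tail v) (Fin.tail w)) (w 0 • 1)) :=
  rfl

theorem susBar_succ (v w : Fin (n + 2) → R) :
    susBar R (n + 1) v w = reindex (pow2Equiv n) (pow2Equiv n)
      (fromBlocks (w 0 • 1) (-sus R n (Fin.tail v) (Fin.tail w))
        (susBar R n (Fin.tail v) (Fin.tail w)) (v 0 • 1)) := by
  simp [susBar, sus_succ, fromBlocks_transpose]

theorem sus_add (v w v' w' : Fin (n + 1) → R) :
    sus R n (v + v') (w + w') = sus R n v w + sus R n v' w' := by
  induction n with
  | zero => simp [sus, add_smul]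
  | succ n ih =>
    have tail_add (x y : Fin (n + 2) → R) : Fin.tail (x + y) = Fin.tail x + Fin.tail y := rfl
    simp only [sus_succ, susBar, tail_add, ih, transpose_add, neg_add, Pi.add_apply, add_smul,
      ← fromBlocks_add, reindex_apply, submatrix_add]

theorem sus_smul (c : R) (v w : Fin (n + 1) → R) :
    sus R n (c • v) (c • w) = c • sus R n v w := by
  induction n with
  | zero => simp [sus, mul_smul]
  | succ n ih =>
    have tail_smul (x : Fin (n + 2) → R) : Fin.tail (c • x) = c • Fin.tail x := rfl
    simp only [sus_succ, susBar, tail_smul, ih, transpose_smul, ← smul_neg, Pi.smul_apply,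
      smul_assoc, ← fromBlocks_smul, reindex_apply, submatrix_smul]

theorem sus_neg (v w : Fin (n + 1) → R) : sus R n (-v) (-w) = -sus R n v w := by
  simpa using sus_smul (-1) v w

theorem sus_sub (v w v' w' : Fin (n + 1) → R) :
    sus R n (v - v') (w - w') = sus R n v w - sus R n v' w' := by
  simp only [sub_eq_add_neg, sus_add, sus_neg]

theorem susBar_add (v w v' w' : Fin (n + 1) → R) :
    susBar R n (v + v') (w + w') = susBar R n v w + susBar R n v' w' := by
  simp only [susBar, sus_add, transpose_add]

theorem dotProduct_eq_mul_add_tail {S : Type*} [NonUnitalNonAssocSemiring S]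
    (v w : Fin (n + 1) → S) :
    v ⬝ᵥ w = v 0 * w 0 + Fin.tail v ⬝ᵥ Fin.tail w :=
  Fin.sum_univ_succ _

/- The induction step for either product uses both products at the previous level. -/
theorem sus_mul_susBar_and_susBar_mul_sus (v w : Fin (n + 1) → R) :
    sus R n v w * susBar R n v w = (v ⬝ᵥ w) • 1 ∧
      susBar R n v w * sus R n v w = (v ⬝ᵥ w) • 1 := by
  induction n with
  | zero => simp [sus, susBar, dotProduct, smul_smul, mul_comm]
  | succ n ih =>
    obtain ⟨hXY, hYX⟩ := ih (Fin.tail v) (Fin.tail w)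
    have blocks_mul := fromBlocks_smul_one_mul_fromBlocks_smul_one hXY hYX (v 0) (w 0)
    have blocks_mul' := fromBlocks_smul_one_mul_fromBlocks_smul_one
      ((neg_mul_neg _ _).trans hXY) ((neg_mul_neg _ _).trans hYX) (w 0) (v 0)
    rw [neg_neg, neg_neg, mul_comm (w 0)] at blocks_mul'
    simp only [sus_succ, susBar_succ, reindex_apply, submatrix_mul_equiv, blocks_mul, blocks_mul',
      submatrix_smul, Pi.smul_apply, submatrix_one_equiv, dotProduct_eq_mul_add_tail v w,
      and_self]

theorem sus_mul_susBar (v w : Fin (n + 1) → R) :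
    sus R n v w * susBar R n v w = (v ⬝ᵥ w) • 1 :=
  (sus_mul_susBar_and_susBar_mul_sus v w).1

theorem susBar_mul_sus (v w : Fin (n + 1) → R) :
    susBar R n v w * sus R n v w = (v ⬝ᵥ w) • 1 :=
  (sus_mul_susBar_and_susBar_mul_sus v w).2

theorem sus_mul_susBar_add_sus_mul_susBar (v w v' w' : Fin (n + 1) → R) :
    sus R n v w * susBar R n v' w' + sus R n v' w' * susBar R n v w =
      (v ⬝ᵥ w' + v' ⬝ᵥ w) • 1 := by
  calc
    _ = (sus R n v w + sus R n v' w') * (susBar R n v w + susBar R n v' w') -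
          sus R n v w * susBar R n v w - sus R n v' w' * susBar R n v' w' := by noncomm_ring
    _ = ((v + v') ⬝ᵥ (w + w') - v ⬝ᵥ w - v' ⬝ᵥ w') • 1 := by
      rw [← sus_add, ← susBar_add, sus_mul_susBar, sus_mul_susBar, sus_mul_susBar, sub_smul,
        sub_smul]
    _ = (v ⬝ᵥ w' + v' ⬝ᵥ w) • 1 := by
      congr 1
      simp only [add_dotProduct, dotProduct_add]
      ring

theorem sus_mul_susBar_mul_sus (v w v' w' : Fin (n + 1) → R) :
    sus R n v w * susBar R n v' w' * sus R n v w =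
      sus R n ((v ⬝ᵥ w' + v' ⬝ᵥ w) • v - (v ⬝ᵥ w) • v')
        ((v ⬝ᵥ w' + v' ⬝ᵥ w) • w - (v ⬝ᵥ w) • w') := by
  rw [eq_sub_of_add_eq (sus_mul_susBar_add_sus_mul_susBar v w v' w'), sub_mul, mul_assoc,
    susBar_mul_sus, sus_sub, sus_smul, sus_smul, smul_one_mul, mul_smul_one]

theorem susBar_mul_sus_mul_susBar (v w v' w' : Fin (n + 1) → R) :
    susBar R n v w * sus R n v' w' * susBar R n v w =
      susBar R n ((v ⬝ᵥ w' + v' ⬝ᵥ w) • v - (v ⬝ᵥ w) • v')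
        ((v ⬝ᵥ w' + v' ⬝ᵥ w) • w - (v ⬝ᵥ w) • w') := by
  have swapped := congrArg transpose (sus_mul_susBar_mul_sus w v w' v')
  have polar_swap : w ⬝ᵥ v' + w' ⬝ᵥ v = v ⬝ᵥ w' + v' ⬝ᵥ w := by
    rw [dotProduct_comm w, dotProduct_comm w', add_comm]
  rw [polar_swap, dotProduct_comm w v] at swapped
  simpa only [susBar, transpose_mul, transpose_transpose, mul_assoc] using swapped

/-- The first vector of the pair `(conjVec v w, conjVec w v)` whose Suslin matrix is `S̄_n(v, w)`:
the head of `w` followed by the negated tail of `v`. -/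
def conjVec {S : Type*} [Neg S] (v w : Fin (n + 1) → S) : Fin (n + 1) → S :=
  Fin.cons (w 0) (-Fin.tail v)

theorem conjVec_conjVec {S : Type*} [InvolutiveNeg S] (v w : Fin (n + 1) → S) :
    conjVec (conjVec v w) (conjVec w v) = v := by
  simp [conjVec]

theorem sus_conjVec (v w : Fin (n + 1) → R) :
    sus R n (conjVec v w) (conjVec w v) = susBar R n v w := by
  cases n with
  | zero => simp [sus, susBar, conjVec]
  | succ n =>
    rw [susBar_succ, sus_succ]
    simp [conjVec, susBar, sus_neg]

theorem susBar_conjVec (v w : Fin (n + 1) → R) :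
    susBar R n (conjVec v w) (conjVec w v) = sus R n v w := by
  rw [← sus_conjVec, conjVec_conjVec, conjVec_conjVec]

end

/-- Jose–Rao fundamental lemma: if `X = S_n(v,w)` and `Y = S_n(v',w')` are
Suslin matrices (`n ≥ 1`), then `X·Y·X` is again a Suslin matrix `S_n(v'',w'')`, and moreover
`S̄_n(v'',w'') = X̄·Ȳ·X̄`. -/
theorem suslin_sandwich (R : Type) [CommRing R] (n : ℕ) (hn : 1 ≤ n)
    (v w v' w' : Fin (n + 1) → R) :
    ∃ v'' w'' : Fin (n + 1) → R,
      sus R n v w * sus R n v' w' * sus R n v w = sus R n v'' w'' ∧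
      susBar R n v'' w'' = susBar R n v w * susBar R n v' w' * susBar R n v w := by
  rw [← susBar_conjVec v' w', ← sus_conjVec v' w']
  exact ⟨_, _, sus_mul_susBar_mul_sus v w _ _, (susBar_mul_sus_mul_susBar v w _ _).symm⟩
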